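/- arXiv:1609.08067 — 2 statements merged into one kernel-verified Lean document; each statement's English description precedes it below -/
import Mathlib

section
/- Let G_1(V,E_1) and G_2(V,E_2) be two directed graphs on the vertex set [n] inducing the same metric, i.e., w_{G_1}(x) = w_{G_2}(x) for all x ∈ F_q^n. Then the expanded canonical forms of G_1 and G_2 are equal: for all u ≠ v in [n], v is reachable from u by a directed path of length ≥ 1 in G_1 if and only if v is reachable from u by a directed path of length ≥ 1 in G_2. -/
/-- The closure of a set of vertices `X` in the directed graph with edge relation `E`. -/
def gclosure {n : ℕ} (E : Fin n → Fin n → Prop) (X : Set (Fin n)) : Set (Fin n) :=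
  {v | ∃ u ∈ X, Relation.ReflTransGen E u v}

/-- The `G`-weight of a word `x`. -/
noncomputable def gweight {n : ℕ} {F : Type*} [Field F] (E : Fin n → Fin n → Prop)
    (x : Fin n → F) : ℕ :=
  (gclosure E {i | x i ≠ 0}).ncard

/-!
Two closure operators `c`, `d` on a finite set for which `c X` and `d X` always have the same
cardinality are equal. Indeed `c (c X) = c X`, so `d (c X)` has the cardinality of its subset `d X`;
hence `d (c X) = d X`, which gives `c X ⊆ d X`, and the reverse inclusion holds by symmetry.
The words with entries `0` and `1` realise every set of vertices as a support, so the weight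
determines the cardinality of the closure of every set, and the closure of `{u}` consists of the
vertices reachable from `u`.
-/

theorem closureOperator_eq_of_strictMono {α β : Type*} [PartialOrder α] [Preorder β] {φ : α → β}
    (hφ : StrictMono φ) {c d : ClosureOperator α} (h : ∀ x, φ (c x) = φ (d x)) : c = d := by
  have closure_le {c d : ClosureOperator α} (h : ∀ x, φ (c x) = φ (d x)) (x : α) : c x ≤ d x := by
    have rank_eq : φ (d x) = φ (d (c x)) := by rw [← h, ← h, c.idempotent]
    have closure_eq : d x = d (c x) :=
      (d.monotone (c.le_closure x)).eq_of_not_lt fun hlt ↦ (hφ hlt).ne rank_eq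
    exact (d.le_closure (c x)).trans_eq closure_eq.symm
  exact ClosureOperator.ext _ _ fun x ↦
    (closure_le h x).antisymm (closure_le (fun y ↦ (h y).symm) x)

section Reachability

variable {n : ℕ}

/-- The closure `⟨·⟩_G` of a directed graph, bundled as a closure operator on sets of vertices. -/
def reachabilityClosure (E : Fin n → Fin n → Prop) : ClosureOperator (Set (Fin n)) :=
  ClosureOperator.mk' (gclosure E)
    (fun _ _ hXY _ ⟨u, hu, huv⟩ ↦ ⟨u, hXY hu, huv⟩)
    (fun _ u hu ↦ ⟨u, hu, .refl⟩)
    (fun _ _ ⟨_, ⟨u, hu, huv⟩, hvw⟩ ↦ ⟨u, hu, huv.trans hvw⟩)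

theorem gclosure_eq_of_ncard_eq {E₁ E₂ : Fin n → Fin n → Prop}
    (h : ∀ X, (gclosure E₁ X).ncard = (gclosure E₂ X).ncard) : gclosure E₁ = gclosure E₂ :=
  congrArg DFunLike.coe <| closureOperator_eq_of_strictMono Set.ncard_strictMono
    (c := reachabilityClosure E₁) (d := reachabilityClosure E₂) h

theorem mem_gclosure_singleton {E : Fin n → Fin n → Prop} {u v : Fin n} :
    v ∈ gclosure E {u} ↔ Relation.ReflTransGen E u v := by
  simp [gclosure]

theorem mem_gclosure_singleton_iff_transGen {E : Fin n → Fin n → Prop} {u v : Fin n}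
    (huv : u ≠ v) : v ∈ gclosure E {u} ↔ Relation.TransGen E u v := by
  rw [mem_gclosure_singleton, Relation.reflTransGen_iff_eq_or_transGen, or_iff_right huv.symm]

theorem gweight_indicator_one {F : Type*} [Field F] (E : Fin n → Fin n → Prop)
    (X : Set (Fin n)) : gweight E (X.indicator (1 : Fin n → F)) = (gclosure E X).ncard := by
  have support_eq : {i | X.indicator (1 : Fin n → F) i ≠ 0} = X := by
    ext i
    simp
  rw [gweight, support_eq]

theorem gclosure_eq_of_gweight_eq {F : Type*} [Field F] {E₁ E₂ : Fin n → Fin n → Prop}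
    (h : ∀ x : Fin n → F, gweight E₁ x = gweight E₂ x) : gclosure E₁ = gclosure E₂ :=
  gclosure_eq_of_ncard_eq fun X ↦ by
    simpa only [gweight_indicator_one] using h (X.indicator 1)

end Reachability

theorem stmt_4_general {n : ℕ} {F : Type*} [Field F] (E₁ E₂ : Fin n → Fin n → Prop)
    (h : ∀ x : Fin n → F, gweight E₁ x = gweight E₂ x) :
    ∀ u v : Fin n, u ≠ v →
      (Relation.TransGen E₁ u v ↔ Relation.TransGen E₂ u v) := by
  intro u v huv
  rw [← mem_gclosure_singleton_iff_transGen huv, ← mem_gclosure_singleton_iff_transGen huv,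
    gclosure_eq_of_gweight_eq h]

/-- if two directed graphs on `[n]` induce the same metric on `F_q^n`, then
their expanded canonical forms are equal: for all `u ≠ v`, `v` is reachable from `u` by a
directed path of length `≥ 1` in `G₁` iff this holds in `G₂`. -/
theorem stmt_4 {n : ℕ} (hn : 1 ≤ n) {F : Type*} [Field F] [Fintype F]
    (E₁ E₂ : Fin n → Fin n → Prop) (hE₁ : Irreflexive E₁) (hE₂ : Irreflexive E₂)
    (h : ∀ x : Fin n → F, gweight E₁ x = gweight E₂ x) :
    ∀ u v : Fin n, u ≠ v →
      (Relation.TransGen E₁ u v ↔ Relation.TransGen E₂ u v) :=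
  stmt_4_general E₁ E₂ h
end

section
/- Let G be a directed graph on [n] whose reduced canonical form determines a hierarchical poset P_G, and fix a level index i. Let C ⊆ F_q^n be a linear code with supp(C) ⊆ V_i (every codeword is supported in the i-th level of G), and let x ∈ F_q^n be a vector such that Max_G(x) ⊆ V_i and whose cleared-out form x̃ does not belong to C. Then the codes C ⊕ span{x} and C ⊕ span{x̃} are G-equivalent. -/
/-- `u` dominates `v`: `v` is reachable from `u` by a directed path. -/
def gdom {n : ℕ} (E : Fin n → Fin n → Prop) : Fin n → Fin n → Prop :=
  Relation.ReflTransGen E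

/-- Clique equivalence: `u` and `v` dominate each other. -/
def cliqueSetoid {n : ℕ} (E : Fin n → Fin n → Prop) : Setoid (Fin n) where
  r u v := gdom E u v ∧ gdom E v u
  iseqv := ⟨fun _ => ⟨Relation.ReflTransGen.refl, Relation.ReflTransGen.refl⟩,
    fun h => ⟨h.2, h.1⟩,
    fun h₁ h₂ => ⟨h₁.1.trans h₂.1, h₂.2.trans h₁.2⟩⟩

/-- The set of classes `V′` of the reduced canonical form of `G`. -/
def Vred {n : ℕ} (E : Fin n → Fin n → Prop) : Type :=
  Quotient (cliqueSetoid E)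

/-- The projection `π` from vertices to their classes. -/
def gpi {n : ℕ} (E : Fin n → Fin n → Prop) (v : Fin n) : Vred E :=
  Quotient.mk (cliqueSetoid E) v

/-- The order of the poset `P_G` on the classes: `π(v) ⪯ π(u)` iff `u` dominates `v`. -/
def ple {n : ℕ} (E : Fin n → Fin n → Prop) (a b : Vred E) : Prop :=
  ∃ u v : Fin n, gpi E v = a ∧ gpi E u = b ∧ gdom E u v

/-- The weight `L(a)` of a class: the number of vertices in it. -/
noncomputable def lwt {n : ℕ} (E : Fin n → Fin n → Prop) (a : Vred E) : ℕ :=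
  {v : Fin n | gpi E v = a}.ncard

/-- The height of `a` in `P_G`: the maximum cardinality of a chain of `P_G` having `a`
as its maximal element. -/
noncomputable def hgt {n : ℕ} (E : Fin n → Fin n → Prop) (a : Vred E) : ℕ :=
  sSup {k | ∃ c : Set (Vred E), c.ncard = k ∧ a ∈ c ∧ (∀ x ∈ c, ple E x a) ∧
    ∀ x ∈ c, ∀ y ∈ c, ple E x y ∨ ple E y x}

/-- `P_G` is hierarchical: every element of height `i > 1` lies strictly above every
element of height `i − 1`. -/
def Hierarchical {n : ℕ} (E : Fin n → Fin n → Prop) : Prop :=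
  ∀ a b : Vred E, 1 < hgt E a → hgt E b + 1 = hgt E a → (ple E b a ∧ b ≠ a)

/-- `G` satisfies the Unique Decomposition Property: any two subsets of a level of `P_G`
with the same total `L`-weight are matched by an `L`-preserving bijection. -/
def UDP {n : ℕ} (E : Fin n → Fin n → Prop) : Prop :=
  ∀ (i : ℕ) (S S' : Set (Vred E)),
    S ⊆ {a | hgt E a = i} → S' ⊆ {a | hgt E a = i} →
    (∑ᶠ a ∈ S, lwt E a) = (∑ᶠ a ∈ S', lwt E a) →
    ∃ g : Vred E → Vred E, Set.BijOn g S S' ∧ ∀ a ∈ S, lwt E (g a) = lwt E a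

open Classical in
/-- The set `Max_G(x)`: indices in the support of `x` whose class is maximal in
`π(supp(x))` with respect to `P_G`. -/
def maxSupp {n : ℕ} {F : Type*} [Field F] (E : Fin n → Fin n → Prop)
    (x : Fin n → F) : Set (Fin n) :=
  {j | x j ≠ 0 ∧ ∀ k : Fin n, x k ≠ 0 → ple E (gpi E j) (gpi E k) → gpi E k = gpi E j}

open Classical in
/-- The cleared-out form `x̃` of `x`: keep the coordinates in `Max_G(x)`, zero elsewhere. -/
noncomputable def cleared {n : ℕ} {F : Type*} [Field F] (E : Fin n → Fin n → Prop)
    (x : Fin n → F) : Fin n → F :=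
  fun j => if j ∈ maxSupp E x then x j else 0

/-!
In a hierarchical poset a vertex of level at least `i` dominates every vertex of level below `i`,
and passing from `x` to `x̃` only changes coordinates of level below `i`. Let `A` be the set of
vertices of level at least `i`. As `C` and `x̃` are supported in `A` and `x̃ ∉ C`, some linear
functional `φ` vanishes on `C` and on the words that are zero on `A`, and takes the value `1` at
`x`. The transvection `z ↦ z + φ z • (x̃ - x)` fixes `C` and sends `x` to `x̃`. It preserves
weights: it moves `z` only if `φ z ≠ 0`, and then both `z` and its image are nonzero at some
vertex of `A`, which already dominates all the coordinates that change.
-/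

section Order

variable {n : ℕ} {E : Fin n → Fin n → Prop}

theorem ple_gpi {u v : Fin n} : ple E (gpi E v) (gpi E u) ↔ gdom E u v := by
  refine ⟨?_, fun h => ⟨u, v, rfl, rfl, h⟩⟩
  rintro ⟨u', v', hv, hu, h⟩
  have hvv' : gdom E v' v := (Quotient.exact hv).1
  have huu' : gdom E u u' := (Quotient.exact hu).2
  exact (huu'.trans h).trans hvv'

/-- The poset `P_G` on the classes of `G`, so that `a ≤ b` unfolds to `ple E a b`. -/
instance Vred.instPartialOrder : PartialOrder (Vred E) where
  le := ple E
  le_refl := Quotient.ind fun _ => ple_gpi.2 .refl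
  le_trans := by
    rintro ⟨u⟩ ⟨v⟩ ⟨w⟩ huv hvw
    exact ple_gpi.2 ((ple_gpi.1 hvw).trans (ple_gpi.1 huv))
  le_antisymm := by
    rintro ⟨u⟩ ⟨v⟩ huv hvu
    exact Quotient.sound ⟨ple_gpi.1 hvu, ple_gpi.1 huv⟩

instance Vred.instFinite : Finite (Vred E) :=
  Quotient.finite _

end Order

section Height

variable {n : ℕ} {E : Fin n → Fin n → Prop} {a b : Vred E}

theorem isGreatest_hgt (a : Vred E) :
    IsGreatest (Set.ncard '' {c : Set (Vred E) | IsGreatest c a ∧ IsChain (· ≤ ·) c})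
      (hgt E a) := by
  set S := Set.ncard '' {c : Set (Vred E) | IsGreatest c a ∧ IsChain (· ≤ ·) c}
  have hgt_eq : hgt E a = sSup S := by
    refine congrArg sSup (Set.ext fun k => ⟨?_, ?_⟩)
    · rintro ⟨c, hk, ha, hle, hc⟩
      exact ⟨c, ⟨⟨ha, hle⟩, fun x hx y hy _ => hc x hx y hy⟩, hk⟩
    · rintro ⟨c, ⟨⟨ha, hle⟩, hc⟩, hk⟩
      exact ⟨c, hk, ha, hle, fun x hx y hy => hc.total hx hy⟩
  have nonempty : S.Nonempty := ⟨_, {a}, ⟨isGreatest_singleton, IsChain.singleton⟩, rfl⟩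
  have bddAbove : BddAbove S := by
    refine ⟨Nat.card (Vred E), ?_⟩
    rintro _ ⟨c, -, rfl⟩
    exact Set.ncard_le_card c
  exact hgt_eq ▸ ⟨Nat.sSup_mem nonempty bddAbove, fun _ hk => le_csSup bddAbove hk⟩

theorem hgt_pos (a : Vred E) : 0 < hgt E a := by
  obtain ⟨c, ⟨ha, -⟩, hcard⟩ := (isGreatest_hgt a).1
  exact hcard ▸ (Set.ncard_pos c.toFinite).2 ⟨a, ha.1⟩

theorem hgt_strictMono : StrictMono (hgt E) := by
  intro a b hab
  obtain ⟨c, ⟨ha, hc⟩, hcard⟩ := (isGreatest_hgt a).1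
  have lt_b : ∀ x ∈ c, x < b := fun x hx => (ha.2 hx).trans_lt hab
  have hb : b ∉ c := fun hb => (lt_b b hb).false
  have greatest : IsGreatest (insert b c) b :=
    ⟨Set.mem_insert b c, Set.forall_mem_insert.2 ⟨le_rfl, fun x hx => (lt_b x hx).le⟩⟩
  have chain : IsChain (· ≤ ·) (insert b c) := hc.insert fun x hx _ => .inr (lt_b x hx).le
  calc hgt E a < (insert b c).ncard := by
        rw [Set.ncard_insert_of_notMem hb, hcard]
        exact Nat.lt_succ_self _
    _ ≤ hgt E b := (isGreatest_hgt b).2 ⟨_, ⟨greatest, chain⟩, rfl⟩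

theorem exists_lt_hgt_add_one_eq (ha : 1 < hgt E a) : ∃ d < a, hgt E d + 1 = hgt E a := by
  obtain ⟨c, ⟨hca, hc⟩, hcard⟩ := (isGreatest_hgt a).1
  have card_diff : (c \ {a}).ncard + 1 = hgt E a :=
    hcard ▸ Set.ncard_sdiff_singleton_add_one hca.1
  have chain : IsChain (· ≤ ·) (c \ {a}) := hc.mono Set.sdiff_subset
  have nonempty : (c \ {a}).Nonempty := Set.nonempty_of_ncard_ne_zero (by omega)
  obtain ⟨d, hd⟩ := (c \ {a}).toFinite.exists_maximal nonempty
  have greatest : IsGreatest (c \ {a}) d :=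
    ⟨hd.prop, fun x hx => (chain.total hx hd.prop).elim id (hd.le_of_ge hx)⟩
  have lt_a : d < a := (hca.2 hd.prop.1).lt_of_ne hd.prop.2
  have card_le : (c \ {a}).ncard ≤ hgt E d := (isGreatest_hgt d).2 ⟨_, ⟨greatest, chain⟩, rfl⟩
  have hgt_lt : hgt E d < hgt E a := hgt_strictMono lt_a
  exact ⟨d, lt_a, by omega⟩

theorem Hierarchical.le_of_hgt_lt (hh : Hierarchical E) (hba : hgt E b < hgt E a) : b ≤ a := by
  induction a using WellFoundedLT.induction with
  | ind a ih =>
    have one_lt : 1 < hgt E a := (Nat.succ_le_of_lt (hgt_pos b)).trans_lt hba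
    obtain ⟨d, hda, hd⟩ := exists_lt_hgt_add_one_eq one_lt
    rcases (Nat.le_of_lt_succ (hd ▸ hba)).eq_or_lt with hbd | hbd
    · exact (hh a b one_lt (hbd ▸ hd)).1
    · exact (ih d hda hbd).trans hda.le

end Height

section Cleared

variable {n : ℕ} {F : Type*} [Field F] {E : Fin n → Fin n → Prop} {x : Fin n → F} {j : Fin n}

theorem exists_mem_maxSupp_lt (hj : x j ≠ 0) (hjx : j ∉ maxSupp E x) :
    ∃ k ∈ maxSupp E x, gpi E j < gpi E k := by
  obtain ⟨k, ⟨hk, hjk⟩, hkmax⟩ :=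
    {k | x k ≠ 0 ∧ gpi E j ≤ gpi E k}.toFinite.exists_maximalFor (gpi E) _ ⟨j, hj, le_rfl⟩
  have hkx : k ∈ maxSupp E x :=
    ⟨hk, fun l hl hkl => (hkmax ⟨hl, hjk.trans hkl⟩ hkl).antisymm hkl⟩
  refine ⟨k, hkx, hjk.lt_of_ne fun h => hjx ⟨hj, ?_⟩⟩
  rw [h]
  exact hkx.2

theorem cleared_apply_of_mem (hj : j ∈ maxSupp E x) : cleared E x j = x j :=
  if_pos hj

theorem cleared_apply_of_notMem (hj : j ∉ maxSupp E x) : cleared E x j = 0 :=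
  if_neg hj

theorem exists_mem_maxSupp_lt_of_cleared_ne (hj : cleared E x j ≠ x j) :
    ∃ k ∈ maxSupp E x, gpi E j < gpi E k := by
  have hjx : j ∉ maxSupp E x := fun h => hj (cleared_apply_of_mem h)
  exact exists_mem_maxSupp_lt (cleared_apply_of_notMem hjx ▸ hj.symm) hjx

end Cleared

section Weight

variable {n : ℕ} {F : Type*} [Field F] {E : Fin n → Fin n → Prop}

theorem gclosure_subset_gclosure {X Y : Set (Fin n)} (h : X ⊆ gclosure E Y) :
    gclosure E X ⊆ gclosure E Y := by
  rintro v ⟨u, hu, huv⟩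
  obtain ⟨w, hw, hwu⟩ := h hu
  exact ⟨w, hw, hwu.trans huv⟩

theorem gclosure_support_add_subset {y z : Fin n → F} {k : Fin n} (hk : z k ≠ 0)
    (hky : ∀ j, y j ≠ 0 → gdom E k j) :
    gclosure E {j | (z + y) j ≠ 0} ⊆ gclosure E {j | z j ≠ 0} := by
  refine gclosure_subset_gclosure fun j hj => ?_
  by_cases hzj : z j = 0
  · exact ⟨k, hk, hky j fun hyj => hj (by rw [Pi.add_apply, hzj, hyj, add_zero])⟩
  · exact ⟨j, hzj, .refl⟩

theorem gweight_add_of_dominates {y z : Fin n → F} {k : Fin n} (hk : z k ≠ 0) (hyk : y k = 0)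
    (hky : ∀ j, y j ≠ 0 → gdom E k j) : gweight E (z + y) = gweight E z := by
  have hk' : (z + y) k ≠ 0 := by rwa [Pi.add_apply, hyk, add_zero]
  have hky' : ∀ j, (-y) j ≠ 0 → gdom E k j := fun j hj => hky j (neg_ne_zero.1 hj)
  have reverse := gclosure_support_add_subset hk' hky'
  rw [add_neg_cancel_right] at reverse
  exact congrArg Set.ncard ((gclosure_support_add_subset hk hky).antisymm reverse)

end Weight

theorem exists_dual_eq_one_of_not_eqOn {ι F : Type*} [Field F] {A : Set ι}
    {C : Submodule F (ι → F)} {x : ι → F} (hx : ∀ c ∈ C, ¬ Set.EqOn x c A) :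
    ∃ φ : Module.Dual F (ι → F),
      φ x = 1 ∧ C ≤ LinearMap.ker φ ∧ ∀ z, Set.EqOn z 0 A → φ z = 0 := by
  let vanishing : Submodule F (ι → F) := Submodule.pi A fun _ => ⊥
  have hxC : x ∉ C ⊔ vanishing := by
    intro h
    obtain ⟨c, hc, z, hz, rfl⟩ := Submodule.mem_sup.1 h
    exact hx c hc fun k hk => add_eq_left.2 (hz k hk)
  obtain ⟨f, hfx, hf⟩ := Submodule.exists_le_ker_of_notMem hxC
  refine ⟨(f x)⁻¹ • f, inv_mul_cancel₀ hfx, ?_, fun z hz => ?_⟩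
  · exact (le_sup_left.trans hf).trans (LinearMap.ker_le_ker_smul _ _)
  · have hfz : f z = 0 := hf (le_sup_right (a := C) hz)
    rw [LinearMap.smul_apply, hfz, smul_zero]

theorem map_transvection_of_le_ker {R V : Type*} [Ring R] [AddCommGroup V] [Module R V]
    {φ : Module.Dual R V} {v : V} (hv : φ v = 0) {C : Submodule R V}
    (hC : C ≤ LinearMap.ker φ) :
    C.map (LinearEquiv.transvection hv : V →ₗ[R] V) = C := by
  refine SetLike.coe_injective (Set.EqOn.image_eq_self fun c hc => ?_)
  exact LinearEquiv.ker_le_fixedSubmodule_transvection hv (hC hc)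

section Equivalence

variable {n : ℕ} {F : Type*} [Field F] {E : Fin n → Fin n → Prop}
  {C : Submodule F (Fin n → F)} {x x' : Fin n → F}

/-- `G`-equivalence of linear codes: some linear `G`-isometry maps `C` onto `C'`. -/
def GEquivalent (E : Fin n → Fin n → Prop) (C C' : Submodule F (Fin n → F)) : Prop :=
  ∃ T : (Fin n → F) ≃ₗ[F] (Fin n → F),
    (∀ z, gweight E (T z) = gweight E z) ∧ C.map (T : (Fin n → F) →ₗ[F] (Fin n → F)) = C'

theorem gEquivalent_sup_span_of_eqOn {A : Set (Fin n)}
    (hdom : ∀ k ∈ A, ∀ j, x' j ≠ x j → gdom E k j) (hxx' : Set.EqOn x' x A)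
    (hx : ∀ c ∈ C, ¬ Set.EqOn x c A) :
    GEquivalent E (C ⊔ Submodule.span F {x}) (C ⊔ Submodule.span F {x'}) := by
  obtain ⟨φ, hφx, hφC, hφA⟩ := exists_dual_eq_one_of_not_eqOn hx
  have hφ : φ (x' - x) = 0 := hφA _ fun k hk => sub_eq_zero.2 (hxx' hk)
  refine ⟨LinearEquiv.transvection hφ, fun z => ?_, ?_⟩
  · rw [LinearEquiv.transvection.apply]
    by_cases hz : φ z = 0
    · rw [hz, zero_smul, add_zero]
    · obtain ⟨k, hkA, hk⟩ : ∃ k ∈ A, z k ≠ 0 := by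
        by_contra! h
        exact hz (hφA z h)
      refine gweight_add_of_dominates hk ?_ fun j hj => hdom k hkA j ?_
      · rw [Pi.smul_apply, Pi.sub_apply, hxx' hkA, sub_self, smul_zero]
      · rw [Pi.smul_apply, Pi.sub_apply] at hj
        exact sub_ne_zero.1 (right_ne_zero_of_smul hj)
  · have map_x : LinearEquiv.transvection hφ x = x' := by
      rw [LinearEquiv.transvection.apply, hφx, one_smul, add_sub_cancel]
    rw [Submodule.map_sup, map_transvection_of_le_ker hφ hφC, Submodule.map_span,
      Set.image_singleton, LinearEquiv.coe_coe, map_x]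

end Equivalence

theorem stmt_16_general {n : ℕ} {F : Type*} [Field F] {E : Fin n → Fin n → Prop}
    (hh : Hierarchical E) {i : ℕ} {C : Submodule F (Fin n → F)}
    (hC : ∀ c ∈ C, ∀ j, c j ≠ 0 → i ≤ hgt E (gpi E j)) {x : Fin n → F}
    (hmax : ∀ j ∈ maxSupp E x, hgt E (gpi E j) = i) (hxt : cleared E x ∉ C) :
    GEquivalent E (C ⊔ Submodule.span F {x}) (C ⊔ Submodule.span F {cleared E x}) := by
  let A : Set (Fin n) := {j | i ≤ hgt E (gpi E j)}
  have hgt_lt_of_ne : ∀ j, cleared E x j ≠ x j → hgt E (gpi E j) < i := by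
    intro j hj
    obtain ⟨k, hk, hjk⟩ := exists_mem_maxSupp_lt_of_cleared_ne hj
    exact hmax k hk ▸ hgt_strictMono hjk
  have cleared_eqOn : Set.EqOn (cleared E x) x A := fun k hk => by
    by_contra hne
    exact (hgt_lt_of_ne k hne).not_ge hk
  refine gEquivalent_sup_span_of_eqOn (A := A) (fun k hk j hj => ?_) cleared_eqOn
    fun c hc hxc => ?_
  · exact ple_gpi.1 (hh.le_of_hgt_lt ((hgt_lt_of_ne j hj).trans_le hk))
  · suffices cleared E x = c from hxt (this ▸ hc)
    ext j
    by_cases hj : j ∈ A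
    · exact (cleared_eqOn hj).trans (hxc hj)
    · have hcj : c j = 0 := by_contra fun h => hj (hC c hc j h)
      rw [hcj, cleared_apply_of_notMem fun h => hj (hmax j h).ge]

/-- for a hierarchical graph, a level `i`, a linear code `C` supported in the
`i`-th level `V_i` of `G`, and a vector `x` with `Max_G(x) ⊆ V_i` whose cleared-out form
`x̃` is not in `C`, the codes `C ⊕ span{x}` and `C ⊕ span{x̃}` are `G`-equivalent. -/
theorem stmt_16 {n : ℕ} (hn : 1 ≤ n) {F : Type*} [Field F] [Fintype F]
    (E : Fin n → Fin n → Prop) (hE : Irreflexive E) (hh : Hierarchical E)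
    (i : ℕ) (C : Submodule F (Fin n → F))
    (hC : ∀ c ∈ C, ∀ j : Fin n, c j ≠ 0 → hgt E (gpi E j) = i)
    (x : Fin n → F)
    (hmax : ∀ j ∈ maxSupp E x, hgt E (gpi E j) = i)
    (hxt : cleared E x ∉ C) :
    ∃ T : (Fin n → F) →ₗ[F] (Fin n → F),
      Function.Bijective T ∧ (∀ z : Fin n → F, gweight E (T z) = gweight E z) ∧
      Submodule.map T (C ⊔ Submodule.span F {x}) =
        C ⊔ Submodule.span F {cleared E x} := by
  obtain ⟨T, isometry, map_eq⟩ :=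
    stmt_16_general hh (fun c hc j hj => (hC c hc j hj).ge) hmax hxt
  exact ⟨T, T.bijective, isometry, map_eq⟩
end
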